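/- Let Z = Z₀ ⊕ Z₁ be a complex naturally graded filiform Zinbiel superalgebra with dim Z₀ = n ≥ 5 and dim Z₁ = m. Then there exist a basis {e₁, …, e_n} of Z₀ and a basis {f₁, …, f_m} of Z₁ such that e_i·e_j = C(i+j−1, j) e_{i+j} for all i, j with 2 ≤ i+j ≤ n−1, and e₁·f_j = f_{j+1} for 1 ≤ j ≤ m−1. -/

import Mathlib

open Module Submodule

/-- A Zinbiel superalgebra over a field `K`: a `K`-vector space `Z` with a bilinear
multiplication and a direct sum decomposition `Z = Z₀ ⊕ Z₁` such that
`Zᵢ·Zⱼ ⊆ Z_{i+j (mod 2)}` and, for all homogeneous `x, y, z`,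
`(x·y)·z = x·(y·z + (−1)^{|y||z|} z·y)`. -/
structure ZinbielSuper (K : Type*) [Field K] (Z : Type*) [AddCommGroup Z] [Module K Z] where
  mul : Z →ₗ[K] Z →ₗ[K] Z
  Z0 : Submodule K Z
  Z1 : Submodule K Z
  compl : IsCompl Z0 Z1
  mul00 : ∀ x ∈ Z0, ∀ y ∈ Z0, mul x y ∈ Z0
  mul01 : ∀ x ∈ Z0, ∀ y ∈ Z1, mul x y ∈ Z1
  mul10 : ∀ x ∈ Z1, ∀ y ∈ Z0, mul x y ∈ Z1
  mul11 : ∀ x ∈ Z1, ∀ y ∈ Z1, mul x y ∈ Z0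
  zinb_even : ∀ x y z : Z, (x ∈ Z0 ∨ x ∈ Z1) → (y ∈ Z0 ∨ y ∈ Z1) → (z ∈ Z0 ∨ z ∈ Z1) →
    (y ∈ Z0 ∨ z ∈ Z0) → mul (mul x y) z = mul x (mul y z + mul z y)
  zinb_odd : ∀ x y z : Z, (x ∈ Z0 ∨ x ∈ Z1) → y ∈ Z1 → z ∈ Z1 →
    mul (mul x y) z = mul x (mul y z - mul z y)

variable {K : Type*} [Field K] {Z : Type*} [AddCommGroup Z] [Module K Z]

/-- The linear span of all products `a·b` with `a ∈ A`, `b ∈ B`. -/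
def mulSub (mul : Z →ₗ[K] Z →ₗ[K] Z) (A B : Submodule K Z) : Submodule K Z :=
  Submodule.span K {z : Z | ∃ a ∈ A, ∃ b ∈ B, mul a b = z}

/-- `pow0 S k = Z₀^k` for `k ≥ 1`: `Z₀¹ = Z₀`, `Z₀^{k+1} = Z₀·Z₀^k`. -/
def pow0 (S : ZinbielSuper K Z) : ℕ → Submodule K Z
  | 0 => S.Z0
  | 1 => S.Z0
  | (k+2) => mulSub S.mul S.Z0 (pow0 S (k+1))

/-- `pow1 S k = Z₁^k` for `k ≥ 1`: `Z₁¹ = Z₁`, `Z₁^{k+1} = Z₀·Z₁^k`. -/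
def pow1 (S : ZinbielSuper K Z) : ℕ → Submodule K Z
  | 0 => S.Z1
  | 1 => S.Z1
  | (k+2) => mulSub S.mul S.Z0 (pow1 S (k+1))

/-- `Z` is naturally graded: `Z` is isomorphic to `gr(Z)`, i.e. `Z` admits a grading
`Z = ⊕_{i≥1} W i` compatible with the superalgebra structure whose induced filtration
is the natural filtration `(Z₀^k, Z₁^k)`. -/
def NaturallyGraded (S : ZinbielSuper K Z) : Prop :=
  ∃ W : ℕ → Submodule K Z,
    W 0 = ⊥ ∧
    (∀ i : ℕ, Disjoint (W i) (⨆ j : ℕ, ⨆ _ : j ≠ i, W j)) ∧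
    (⨆ i : ℕ, W i) = ⊤ ∧
    (∀ i j : ℕ, ∀ a ∈ W i, ∀ b ∈ W j, S.mul a b ∈ W (i + j)) ∧
    (∀ i : ℕ, W i = (W i ⊓ S.Z0) ⊔ (W i ⊓ S.Z1)) ∧
    (∀ k : ℕ, 1 ≤ k → pow0 S k = ⨆ i : ℕ, ⨆ _ : k ≤ i, (W i ⊓ S.Z0)) ∧
    (∀ k : ℕ, 1 ≤ k → pow1 S k = ⨆ i : ℕ, ⨆ _ : k ≤ i, (W i ⊓ S.Z1))

/-- Iterated left multiplication: `Lmul S x k v = L_x^k v`. -/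
def Lmul (S : ZinbielSuper K Z) (x : Z) : ℕ → Z → Z
  | 0 => fun v => v
  | (k+1) => fun v => S.mul x (Lmul S x k v)

/-- `Z` (with `dim Z₀ = n`, `dim Z₁ = m`) is filiform: there is a characteristic element
`x ∈ Z₀ \ Z₀²` whose left multiplication has Jordan type `(n−1, 1)` on `Z₀` (this being
lexicographically maximal among all `y ∈ Z₀ \ Z₀²`) and Jordan type `(m)` on `Z₁`. -/
def IsFiliform (S : ZinbielSuper K Z) (n m : ℕ) : Prop :=
  ∃ x : Z, x ∈ S.Z0 ∧ x ∉ pow0 S 2 ∧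
    (∀ v ∈ S.Z0, Lmul S x (n - 1) v = 0) ∧
    (∃ v ∈ S.Z0, Lmul S x (n - 2) v ≠ 0) ∧
    (∀ v ∈ S.Z1, Lmul S x m v = 0) ∧
    (∃ v ∈ S.Z1, Lmul S x (m - 1) v ≠ 0) ∧
    (∀ y : Z, y ∈ S.Z0 → y ∉ pow0 S 2 → ∀ v ∈ S.Z0, Lmul S y (n - 1) v = 0)

/-- From a basis `b` of a subspace `W` indexed by `Fin n`, the family of elements of `Z`
indexed by `1 ≤ t ≤ n`, with the convention that out-of-range indices give `0`. -/
noncomputable def sB {n : ℕ} {W : Submodule K Z} (b : Basis (Fin n) K W) : ℕ → Z :=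
  fun t => if h : 1 ≤ t ∧ t ≤ n then ((b ⟨t - 1, by omega⟩ : W) : Z) else 0


theorem pow0_succ (S : ZinbielSuper K Z) (k : ℕ) (hk : 1 ≤ k) :
    pow0 S (k+1) = mulSub S.mul S.Z0 (pow0 S k) := by
  obtain ⟨k, rfl⟩ : ∃ t, k = t + 1 := ⟨k - 1, by omega⟩
  rfl

theorem mulSub_mem {mul : Z →ₗ[K] Z →ₗ[K] Z} {A B : Submodule K Z} {a b : Z}
    (ha : a ∈ A) (hb : b ∈ B) : mul a b ∈ mulSub mul A B :=
  Submodule.subset_span ⟨a, ha, b, hb, rfl⟩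

theorem pow0_le (S : ZinbielSuper K Z) (k : ℕ) : pow0 S k ≤ S.Z0 := by
  induction k with
  | zero => exact le_rfl
  | succ k ih =>
    rcases Nat.eq_zero_or_pos k with rfl | hk
    · exact le_rfl
    · rw [pow0_succ S k hk]
      refine Submodule.span_le.2 ?_
      rintro _ ⟨a, ha, b, hb, rfl⟩
      exact S.mul00 a ha b (ih hb)

theorem pow0_anti (S : ZinbielSuper K Z) (k : ℕ) : pow0 S (k+1) ≤ pow0 S k := by
  induction k with
  | zero => exact le_rfl
  | succ k ih =>
    rcases Nat.eq_zero_or_pos k with rfl | hk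
    · exact pow0_le S 2
    · rw [pow0_succ S (k+1) (by omega)]
      refine Submodule.span_le.2 ?_
      rintro _ ⟨a, ha, b, hb, rfl⟩
      rw [pow0_succ S k hk]
      exact mulSub_mem ha (ih hb)

theorem one_mul_mem (S : ZinbielSuper K Z) {k : ℕ} (hk : 1 ≤ k) {a b : Z}
    (ha : a ∈ S.Z0) (hb : b ∈ pow0 S k) : S.mul a b ∈ pow0 S (k+1) := by
  rw [pow0_succ S k hk]; exact mulSub_mem ha hb

theorem pow0_mul (S : ZinbielSuper K Z) (s : ℕ) : ∀ i j : ℕ, 1 ≤ i → 1 ≤ j → i + j = s →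
    ∀ a ∈ pow0 S i, ∀ b ∈ pow0 S j, S.mul a b ∈ pow0 S s := by
  induction s with
  | zero => intro i j hi hj h; omega
  | succ s ih =>
    intro i j hi hj h a ha b hb
    obtain ⟨i, rfl⟩ : ∃ t, i = t + 1 := ⟨i - 1, by omega⟩
    rcases Nat.eq_zero_or_pos i with rfl | hipos
    · obtain rfl : j = s := by omega
      exact one_mul_mem S hj ha hb
    · rw [pow0_succ S i hipos] at ha
      refine Submodule.span_induction (p := fun a _ => S.mul a b ∈ pow0 S (s+1)) ?_ ?_ ?_ ?_ ha
      · rintro _ ⟨c, hc, d, hd, rfl⟩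
        have hb0 := pow0_le S j hb
        have hd0 := pow0_le S i hd
        rw [S.zinb_even c d b (Or.inl hc) (Or.inl hd0) (Or.inl hb0) (Or.inl hd0)]
        exact one_mul_mem S (by omega) hc (add_mem (ih i j hipos hj (by omega) d hd b hb)
          (ih j i hj hipos (by omega) b hb d hd))
      · simp
      · intro u w _ _ hu hw
        simpa using add_mem hu hw
      · intro t u _ hu
        simpa using Submodule.smul_mem _ t hu

theorem pow0_stab (S : ZinbielSuper K Z) {k : ℕ} (hk : 1 ≤ k) (h : pow0 S (k+1) = pow0 S k)
    (t : ℕ) : pow0 S (k+t) = pow0 S k := by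
  induction t with
  | zero => rfl
  | succ t ih =>
    rw [← add_assoc, pow0_succ S (k+t) (by omega), ih, ← pow0_succ S k hk, h]

theorem pow0_nil [FiniteDimensional K Z] (S : ZinbielSuper K Z) (h : NaturallyGraded S) :
    ∃ N, 2 ≤ N ∧ pow0 S N = ⊥ := by
  obtain ⟨W, -, hd, -, -, -, hp, -⟩ := h
  have hind : iSupIndep W := hd
  have hfin := WellFoundedGT.finite_ne_bot_of_iSupIndep hind
  obtain ⟨M, hM⟩ := hfin.bddAbove
  refine ⟨M + 2, by omega, ?_⟩
  rw [hp (M+2) (by omega)]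
  simp only [iSup_eq_bot]
  intro i hi
  have : W i = ⊥ := by
    by_contra hne
    have := hM hne
    omega
  simp [this]

theorem pow0_mono (S : ZinbielSuper K Z) {i j : ℕ} (h : i ≤ j) : pow0 S j ≤ pow0 S i :=
  antitone_nat_of_succ_le (pow0_anti S) h

theorem pow0_lt (S : ZinbielSuper K Z) {N : ℕ} (hN : pow0 S N = ⊥) {k : ℕ} (hk : 1 ≤ k)
    (hne : pow0 S k ≠ ⊥) : pow0 S (k+1) < pow0 S k := by
  refine lt_of_le_of_ne (pow0_anti S k) ?_
  intro h
  apply hne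
  have h1 := pow0_stab S hk h N
  rw [← h1, eq_bot_iff, ← hN]
  exact pow0_mono S (by omega)

theorem Lmul_eq (S : ZinbielSuper K Z) (x : Z) (k : ℕ) (v : Z) :
    Lmul S x k v = ((S.mul x)^k) v := by
  induction k with
  | zero => rfl
  | succ k ih => rw [pow_succ', Module.End.mul_apply, ← ih]; rfl

theorem L_mem (S : ZinbielSuper K Z) {x : Z} (hx : x ∈ S.Z0) {i : ℕ} (hi : 1 ≤ i) {v : Z}
    (hv : v ∈ pow0 S i) (k : ℕ) : ((S.mul x)^k) v ∈ pow0 S (i+k) := by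
  induction k with
  | zero => exact hv
  | succ k ih =>
    rw [pow_succ', Module.End.mul_apply]
    exact one_mul_mem S (k := i + k) (by omega) hx ih

theorem L_mem1 (S : ZinbielSuper K Z) {x : Z} (hx : x ∈ S.Z0) {v : Z}
    (hv : v ∈ S.Z1) (k : ℕ) : ((S.mul x)^k) v ∈ S.Z1 := by
  induction k with
  | zero => exact hv
  | succ k ih =>
    rw [pow_succ', Module.End.mul_apply]
    exact S.mul01 x hx _ ih

theorem chain_li (L : Module.End K Z) (k : ℕ) : ∀ v : Z, (L^k) v = 0 →
    (∀ j, j < k → (L^j) v ≠ 0) → LinearIndependent K (fun i : Fin k => (L^(i:ℕ)) v) := by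
  induction k with
  | zero => intro v _ _; exact linearIndependent_empty_type
  | succ k ih =>
    intro v h0 h1
    have h2 := ih (L v) (by rw [pow_succ] at h0; exact h0)
      (fun j hj => by have := h1 (j+1) (by omega); rw [pow_succ] at this; exact this)
    have h3 : (fun i : Fin (k+1) => (L^(i:ℕ)) v)
        = Fin.cons v (fun i : Fin k => (L^(i:ℕ)) (L v)) := by
      funext i
      refine Fin.cases ?_ ?_ i
      · simp
      · intro i; simp [pow_succ]
    rw [h3]
    refine LinearIndependent.finCons h2 ?_
    intro hmem
    have hle : Submodule.span K (Set.range (fun i : Fin k => (L^(i:ℕ)) (L v)))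
        ≤ LinearMap.ker (L^k) := by
      rw [Submodule.span_le]
      rintro _ ⟨i, rfl⟩
      change (L^k) ((L^(i:ℕ)) (L v)) = 0
      have : (L^k) ((L^(i:ℕ)) (L v)) = (L^(i:ℕ)) ((L^(k+1)) v) := by
        have e : L^k * L^(i:ℕ) * L = L^(i:ℕ) * L^(k+1) := by
          rw [← pow_add, ← pow_add, ← pow_succ]
          congr 1; omega
        exact congrArg (fun f : Module.End K Z => f v) e
      rw [this, h0, map_zero]
    exact h1 k (by omega) (hle hmem)

theorem pow_ne_of_le (L : Module.End K Z) {v : Z} {k j : ℕ} (h : (L^k) v ≠ 0) (hj : j ≤ k) :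
    (L^j) v ≠ 0 := by
  intro h0
  apply h
  rw [show k = (k - j) + j by omega, pow_add, Module.End.mul_apply, h0, map_zero]

theorem choose_aux (i j : ℕ) (hj : 1 ≤ j) (hi : 1 ≤ i) :
    (i + j - 1).choose j + (j + i - 1).choose i = (i + 1 + j - 1).choose j := by
  obtain ⟨i, rfl⟩ : ∃ t, i = t + 1 := ⟨i - 1, by omega⟩
  obtain ⟨j, rfl⟩ : ∃ t, j = t + 1 := ⟨j - 1, by omega⟩
  have h1 : (j + 1 + (i + 1) - 1).choose (i+1) = (i+1+j).choose j := by
    rw [show j + 1 + (i + 1) - 1 = i + 1 + j by omega]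
    exact Nat.choose_symm_of_eq_add (by omega)
  rw [h1, show i + 1 + (j+1) - 1 = i + 1 + j by omega,
    show i + 1 + 1 + (j+1) - 1 = (i + 1 + j) + 1 by omega, Nat.choose_succ_succ', add_comm]

theorem chain_mul (S : ZinbielSuper K Z) {x : Z} (hx : x ∈ S.Z0) (s : ℕ) : ∀ i j : ℕ,
    1 ≤ i → 1 ≤ j → i + j = s →
    S.mul (((S.mul x)^(i-1)) x) (((S.mul x)^(j-1)) x)
      = ((i + j - 1).choose j : K) • ((S.mul x)^(s-1)) x := by
  have hmem : ∀ k, ((S.mul x)^k) x ∈ S.Z0 := fun k =>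
    pow0_le S _ (L_mem S hx (i := 1) le_rfl (v := x) hx k)
  induction s with
  | zero => intro i j hi hj h; omega
  | succ s ih =>
    intro i j hi hj h
    obtain ⟨i, rfl⟩ : ∃ t, i = t + 1 := ⟨i - 1, by omega⟩
    rcases Nat.eq_zero_or_pos i with rfl | hipos
    · obtain rfl : j = s := by omega
      obtain ⟨j, rfl⟩ : ∃ t, j = t + 1 := ⟨j - 1, by omega⟩
      simp [pow_succ' (S.mul x) j]
    · have e1 : ((S.mul x)^(i+1-1)) x = S.mul x (((S.mul x)^(i-1)) x) := by
        rw [← Module.End.mul_apply, ← pow_succ']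
        congr 2; omega
      have e2 : ((S.mul x)^(s+1-1)) x = S.mul x (((S.mul x)^(s-1)) x) := by
        rw [← Module.End.mul_apply, ← pow_succ']
        congr 2; omega
      rw [e1, S.zinb_even x _ _ (Or.inl hx) (Or.inl (hmem _)) (Or.inl (hmem _))
        (Or.inl (hmem _)), ih i j hipos hj (by omega), ih j i hj hipos (by omega), e2,
        ← add_smul, map_smul, ← choose_aux i j hj hipos, Nat.cast_add]

/-- The one-generated case is impossible. -/
theorem case_one [FiniteDimensional K Z] (S : ZinbielSuper K Z) {n N : ℕ} (hN : pow0 S N = ⊥)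
    (hn : finrank K S.Z0 = n) (h5 : 5 ≤ n) {x : Z} (hx : x ∈ S.Z0)
    (h0 : ∀ v ∈ S.Z0, ((S.mul x)^(n-1)) v = 0)
    (hle : S.Z0 ≤ Submodule.span K {x} ⊔ pow0 S 2) : False := by
  have hA : ∀ t k : ℕ, 1 ≤ k → N ≤ k + t → pow0 S (k+1) ≤ S.Z0.map (S.mul x) := by
    intro t
    induction t with
    | zero =>
      intro k hk hNk
      have : pow0 S (k+1) ≤ pow0 S N := pow0_mono S (by omega)
      rw [hN] at this
      exact this.trans bot_le
    | succ t ih =>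
      intro k hk hNk
      rw [pow0_succ S k hk]
      refine Submodule.span_le.2 ?_
      rintro _ ⟨a, ha, b, hb, rfl⟩
      obtain ⟨y, hy, q, hq, rfl⟩ := Submodule.mem_sup.1 (hle ha)
      obtain ⟨c, rfl⟩ := Submodule.mem_span_singleton.1 hy
      have h1 : S.mul q b ∈ S.Z0.map (S.mul x) := by
        refine ih (k+1) (by omega) (by omega) ?_
        exact pow0_mul S (k+1+1) 2 k (by omega) hk (by omega) q hq b hb
      have h2 : S.mul x (c • b) ∈ S.Z0.map (S.mul x) :=
        Submodule.mem_map_of_mem (Submodule.smul_mem _ _ (pow0_le S k hb))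
      have h3 : S.mul (c • x + q) b = S.mul x (c • b) + S.mul q b := by simp
      rw [h3]
      exact add_mem h2 h1
  have hB : S.Z0 ≤ Submodule.span K {x} ⊔ S.Z0.map (S.mul x) :=
    hle.trans (sup_le_sup_left (hA N 1 le_rfl (by omega)) _)
  have hC : ∀ k : ℕ, S.Z0 ≤ Submodule.span K (Set.range fun i : Fin k => ((S.mul x)^(i:ℕ)) x)
      ⊔ S.Z0.map ((S.mul x)^k) := by
    intro k
    induction k with
    | zero => simp [Module.End.one_eq_id]
    | succ k ih =>
      intro z hz
      obtain ⟨p, hp, q, hq, rfl⟩ := Submodule.mem_sup.1 (ih hz)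
      obtain ⟨w, hw, rfl⟩ := hq
      obtain ⟨y, hy, r, hr, rfl⟩ := Submodule.mem_sup.1 (hB hw)
      obtain ⟨c, rfl⟩ := Submodule.mem_span_singleton.1 hy
      obtain ⟨u, hu, rfl⟩ := hr
      have e : ((S.mul x)^k) (c • x + S.mul x u)
          = c • ((S.mul x)^k) x + ((S.mul x)^(k+1)) u := by
        rw [map_add, map_smul, pow_succ]; rfl
      rw [e, ← add_assoc]
      refine add_mem (add_mem ?_ ?_) ?_
      · refine Submodule.mem_sup_left (Submodule.span_mono ?_ hp)
        rintro _ ⟨i, rfl⟩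
        exact ⟨i.castSucc, rfl⟩
      · refine Submodule.mem_sup_left (Submodule.smul_mem _ _ (Submodule.subset_span ?_))
        exact ⟨Fin.last k, rfl⟩
      · exact Submodule.mem_sup_right (Submodule.mem_map_of_mem hu)
  have hD := hC (n-1)
  have hz : S.Z0.map ((S.mul x)^(n-1)) = ⊥ := by
    rw [eq_bot_iff]
    rintro _ ⟨v, hv, rfl⟩
    exact h0 v hv
  rw [hz, sup_bot_eq] at hD
  have h1 := Submodule.finrank_mono hD
  have h2 := finrank_range_le_card (R := K) (fun i : Fin (n-1) => ((S.mul x)^(i:ℕ)) x)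
  rw [Fintype.card_fin] at h2
  unfold Set.finrank at h2
  omega

/-- The characteristic element generates the long Jordan block. -/
theorem key [FiniteDimensional K Z] (S : ZinbielSuper K Z) {n N : ℕ} (hN : pow0 S N = ⊥)
    (hn : finrank K S.Z0 = n) (h5 : 5 ≤ n) {x : Z} (hx : x ∈ S.Z0) (hx2 : x ∉ pow0 S 2)
    (h0 : ∀ v ∈ S.Z0, ((S.mul x)^(n-1)) v = 0) {v : Z} (hv : v ∈ S.Z0)
    (hv0 : ((S.mul x)^(n-2)) v ≠ 0) : ((S.mul x)^(n-2)) x ≠ 0 := by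
  have hlt : ∀ k, 1 ≤ k → pow0 S k ≠ ⊥ → finrank K (pow0 S (k+1)) < finrank K (pow0 S k) :=
    fun k hk hne => Submodule.finrank_lt_finrank_of_lt (pow0_lt S hN hk hne)
  have d2 : finrank K (pow0 S 2) ≤ n - 2 := by
    have h1 : pow0 S 2 < Submodule.span K {x} ⊔ pow0 S 2 := by
      refine lt_of_le_of_ne le_sup_right ?_
      intro h
      apply hx2
      rw [h]
      exact Submodule.mem_sup_left (Submodule.mem_span_singleton_self x)
    have h2 : Submodule.span K {x} ⊔ pow0 S 2 < S.Z0 := by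
      refine lt_of_le_of_ne (sup_le ?_ (pow0_le S 2)) ?_
      · rw [Submodule.span_singleton_le_iff_mem]; exact hx
      · intro h
        exact case_one S hN hn h5 hx h0 h.ge
    have h3 := Submodule.finrank_lt_finrank_of_lt h1
    have h4 := Submodule.finrank_lt_finrank_of_lt h2
    omega
  have dle : ∀ t, finrank K (pow0 S (2+t)) ≤ n - (2+t) := by
    intro t
    induction t with
    | zero => exact d2
    | succ t ih =>
      by_cases hb : pow0 S (2+t) = ⊥
      · have : pow0 S (2+(t+1)) = ⊥ := by
          rw [eq_bot_iff, ← hb]; exact pow0_mono S (by omega)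
        rw [this, finrank_bot]; omega
      · have := hlt (2+t) (by omega) hb
        have e : 2 + (t+1) = 2 + t + 1 := by omega
        rw [e]; omega
  have hPn : pow0 S n = ⊥ := by
    have := dle (n-2)
    rw [show 2 + (n-2) = n by omega, Nat.sub_self] at this
    exact Submodule.finrank_eq_zero.1 (by omega)
  have hne : ∀ k, k ≤ n - 1 → pow0 S k ≠ ⊥ := by
    intro k hk hb
    have h1 : ((S.mul x)^(n-2)) v ∈ pow0 S (1+(n-2)) := L_mem S hx le_rfl (v := v) hv (n-2)
    have h2 := pow0_mono S (show k ≤ 1 + (n-2) by omega) h1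
    rw [hb, Submodule.mem_bot] at h2
    exact hv0 h2
  have dge : ∀ t, t ≤ n - 2 → t + 1 ≤ finrank K (pow0 S (n-1-t)) := by
    intro t
    induction t with
    | zero =>
      intro _
      have := Submodule.finrank_eq_zero.not.2 (hne (n-1) le_rfl)
      simp only [Nat.sub_zero]; omega
    | succ t ih =>
      intro ht
      have h1 := ih (by omega)
      have h2 := hlt (n-1-(t+1)) (by omega) (hne _ (by omega))
      rw [show n-1-(t+1)+1 = n-1-t by omega] at h2
      omega
  have d3 := dge (n-4) (by omega)
  rw [show n-1-(n-4) = 3 by omega] at d3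
  have split : ∀ j, ((S.mul x)^(n-2)) v = ((S.mul x)^(n-2-j)) (((S.mul x)^j) v) ∨ n - 2 < j := by
    intro j
    by_cases hj : n - 2 < j
    · exact Or.inr hj
    · left
      rw [← Module.End.mul_apply, ← pow_add, show n-2-j+j = n-2 by omega]
  have hv1 : S.mul x v ∈ pow0 S 2 := one_mul_mem S le_rfl hx (show v ∈ pow0 S 1 from hv)
  have hv3 : S.mul x v ∉ pow0 S 3 := by
    intro h
    have h1 := L_mem S hx (by omega) h (n-3)
    rw [show 3 + (n-3) = n by omega, hPn, Submodule.mem_bot, ← Module.End.mul_apply, ← pow_succ,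
      show n-3+1 = n-2 by omega] at h1
    exact hv0 h1
  have hP2 : Submodule.span K {S.mul x v} ⊔ pow0 S 3 = pow0 S 2 := by
    refine Submodule.eq_of_le_of_finrank_le (sup_le ?_ (pow0_anti S 2)) ?_
    · rw [Submodule.span_singleton_le_iff_mem]; exact hv1
    · have : pow0 S 3 < Submodule.span K {S.mul x v} ⊔ pow0 S 3 := by
        refine lt_of_le_of_ne le_sup_right ?_
        intro h
        apply hv3
        rw [h]
        exact Submodule.mem_sup_left (Submodule.mem_span_singleton_self _)
      have := Submodule.finrank_lt_finrank_of_lt this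
      omega
  have hxx : S.mul x x ∈ pow0 S 2 := one_mul_mem S le_rfl hx (show x ∈ pow0 S 1 from hx)
  rw [← hP2] at hxx
  obtain ⟨y, hy, p, hp, hxp⟩ := Submodule.mem_sup.1 hxx
  obtain ⟨a, rfl⟩ := Submodule.mem_span_singleton.1 hy
  by_cases ha : a = 0
  · exfalso
    subst ha
    rw [zero_smul, zero_add] at hxp
    subst hxp
    have hv2 := pow0_le S 2 hv1
    have A1 : S.mul x (S.mul x v + S.mul v x) ∈ pow0 S 4 := by
      rw [← S.zinb_even x x v (Or.inl hx) (Or.inl hx) (Or.inl hv) (Or.inl hx)]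
      exact pow0_mul S 4 3 1 (by omega) (by omega) rfl _ hp _ hv
    have A2 : S.mul (S.mul x v) x ∈ pow0 S 4 := by
      rw [S.zinb_even x v x (Or.inl hx) (Or.inl hv) (Or.inl hx) (Or.inl hv), add_comm]
      exact A1
    have A3 : S.mul x (S.mul x (S.mul x v) + S.mul (S.mul x v) x) ∈ pow0 S 5 := by
      rw [← S.zinb_even x x _ (Or.inl hx) (Or.inl hx) (Or.inl hv2) (Or.inl hx)]
      exact pow0_mul S 5 3 2 (by omega) (by omega) rfl _ hp _ hv1
    have A4 : S.mul x (S.mul x (S.mul x v)) ∈ pow0 S 5 := by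
      rw [map_add] at A3
      exact (Submodule.add_mem_iff_left _ (one_mul_mem S (by omega) hx A2)).1 A3
    have A5 : ((S.mul x)^3) v ∈ pow0 S 5 := by
      simpa [pow_succ, Module.End.mul_apply] using A4
    have h1 := L_mem S hx (by omega) A5 (n-5)
    rw [show 5 + (n-5) = n by omega, hPn, Submodule.mem_bot, ← Module.End.mul_apply, ← pow_add,
      show n-5+3 = n-2 by omega] at h1
    exact hv0 h1
  · have e : ∀ w : Z, ((S.mul x)^(n-2)) w = ((S.mul x)^(n-3)) (S.mul x w) := by
      intro w
      rw [← Module.End.mul_apply, ← pow_succ, show n-3+1 = n-2 by omega]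
    have h1 := L_mem S hx (by omega) hp (n-3)
    rw [show 3 + (n-3) = n by omega, hPn, Submodule.mem_bot] at h1
    rw [e x, ← hxp, map_add, map_smul, h1, add_zero, ← e v]
    exact smul_ne_zero ha hv0

/-- A complex naturally graded filiform Zinbiel superalgebra with `dim Z₀ = n ≥ 5`,
`dim Z₁ = m`, has bases `e₁, …, e_n` of `Z₀` and `f₁, …, f_m` of `Z₁` with
`e_i·e_j = C(i+j−1, j) e_{i+j}` for `2 ≤ i+j ≤ n−1` and `e₁·f_j = f_{j+1}` for
`1 ≤ j ≤ m−1`. -/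
theorem naturallyGraded_filiform_basis
    {Z : Type*} [AddCommGroup Z] [Module ℂ Z] [FiniteDimensional ℂ Z]
    (S : ZinbielSuper ℂ Z) (n m : ℕ)
    (hn : finrank ℂ S.Z0 = n) (hm : finrank ℂ S.Z1 = m) (h5 : 5 ≤ n)
    (hng : NaturallyGraded S) (hfil : IsFiliform S n m) :
    ∃ (b0 : Basis (Fin n) ℂ S.Z0) (b1 : Basis (Fin m) ℂ S.Z1),
      (∀ i j : ℕ, 1 ≤ i → 1 ≤ j → 2 ≤ i + j → i + j ≤ n - 1 →
        S.mul (sB b0 i) (sB b0 j) = ((i + j - 1).choose j : ℂ) • sB b0 (i + j)) ∧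
      (∀ j : ℕ, 1 ≤ j → j ≤ m - 1 →
        S.mul (sB b0 1) (sB b1 j) = sB b1 (j + 1)) := by
  subst hm
  obtain ⟨x, hx, hx2, h0, ⟨v, hv, hv0⟩, h1, ⟨u, hu, hu0⟩, -⟩ := hfil
  simp only [Lmul_eq] at h0 hv0 h1 hu0
  obtain ⟨N, -, hN⟩ := pow0_nil S hng
  have hxn := key S hN hn h5 hx hx2 h0 hv hv0
  have hmpos : 1 ≤ finrank ℂ S.Z1 := by
    by_contra hlt
    have hz : S.Z1 = ⊥ := Submodule.finrank_eq_zero.1 (by omega)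
    have huz := hu
    rw [hz, Submodule.mem_bot] at huz
    exact hu0 (by rw [huz, map_zero])
  set m := finrank ℂ S.Z1 with hmdef
  have li1 := chain_li (S.mul x) m u (h1 u hu)
    (fun j hj => pow_ne_of_le _ hu0 (by omega))
  let F : Fin m → S.Z1 := fun i => ⟨((S.mul x)^(i:ℕ)) u, L_mem1 S hx hu _⟩
  have liF : LinearIndependent ℂ F := LinearIndependent.of_comp S.Z1.subtype li1
  have : Nonempty (Fin m) := ⟨⟨0, hmpos⟩⟩
  let b1 := basisOfLinearIndependentOfCardEqFinrank liF (by rw [Fintype.card_fin])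
  have hb1 : ∀ j, 1 ≤ j → j ≤ m → sB b1 j = ((S.mul x)^(j-1)) u := by
    intro j hj hjm
    unfold sB
    rw [dif_pos ⟨hj, hjm⟩]
    simp [b1, F]
  have li0 := chain_li (S.mul x) (n-1) x (h0 x hx)
    (fun j hj => pow_ne_of_le _ hxn (by omega))
  have hmem0 : ∀ k, ((S.mul x)^k) x ∈ S.Z0 := fun k =>
    pow0_le S _ (L_mem S hx (i := 1) le_rfl (v := x) hx k)
  let E : Fin (n-1) → S.Z0 := fun i => ⟨((S.mul x)^(i:ℕ)) x, hmem0 _⟩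
  have liE : LinearIndependent ℂ E := LinearIndependent.of_comp S.Z0.subtype li0
  obtain ⟨y, hy⟩ : ∃ y : S.Z0, y ∉ Submodule.span ℂ (Set.range E) := by
    by_contra hcon
    push Not at hcon
    have htop : Submodule.span ℂ (Set.range E) = ⊤ := eq_top_iff.2 fun z _ => hcon z
    have h2 := finrank_range_le_card (R := ℂ) E
    unfold Set.finrank at h2
    rw [htop, finrank_top, hn, Fintype.card_fin] at h2
    omega
  obtain ⟨r, rfl⟩ : ∃ r, n = r + 1 := ⟨n - 1, by omega⟩
  have liG : LinearIndependent ℂ (Fin.snoc E y : Fin (r+1) → S.Z0) :=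
    LinearIndependent.finSnoc liE hy
  let b0 := basisOfLinearIndependentOfCardEqFinrank liG (by rw [Fintype.card_fin, hn])
  have hb0 : ∀ j, 1 ≤ j → j ≤ r → sB b0 j = ((S.mul x)^(j-1)) x := by
    intro j hj hjm
    unfold sB
    rw [dif_pos ⟨hj, by omega⟩]
    have : (⟨j - 1, by omega⟩ : Fin (r+1)) = Fin.castSucc ⟨j-1, by omega⟩ := rfl
    simp only [b0, coe_basisOfLinearIndependentOfCardEqFinrank]
    rw [this, Fin.snoc_castSucc]
  refine ⟨b0, b1, ?_, ?_⟩
  · intro i j hi hj _ hij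
    rw [hb0 i hi (by omega), hb0 j hj (by omega), hb0 (i+j) (by omega) (by omega)]
    exact chain_mul S hx (i+j) i j hi hj rfl
  · intro j hj hjm
    rw [hb0 1 le_rfl (by omega), hb1 j hj (by omega), hb1 (j+1) (by omega) (by omega)]
    simp only [Nat.sub_self, pow_zero, Module.End.one_apply, Nat.add_sub_cancel]
    rw [← Module.End.mul_apply, ← pow_succ', show j - 1 + 1 = j by omega]
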